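/- Suppose ∇ is a flat ℝ-linear connection of L on E, p ≥ 2 is even, and there exists an ℝ-linear connection ∇_m of L on E that is metric with respect to h, i.e. ρ(a)(h(s,t)) = h((∇_m)_a s, t) + h(s, (∇_m)_a t) for all a ∈ L, s,t ∈ E. Then cs_p(∇, ∇^h) is d_ρ-exact: there exists a C-valued ℝ-linear (2p−2)-form η on L with d_ρ η = cs_p(∇, ∇^h); i.e. the secondary characteristic class u_{2p−1} = [cs_p(∇,∇^h)] vanishes. -/

import Mathlib

/-! Write `λ = ∇^h − ∇`. Both `∇` and its adjoint are flat, so `R_t = (t² − t) λ ∧ λ` and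
`λ ∧ R_t^{p−1}` is a multiple of `λ^{2p−1}`. Each `λ_a` is self-adjoint for `h`, and taking the
adjoint of a product of self-adjoint operators reverses its factors. Hence the adjoint of `λ^{2p−1}`
is `sgn(reversal) • λ^{2p−1}`, with sign `(−1)^{(2p−1)(p−1)} = −1` for even `p`. Adjoint operators
have the same trace, so `Tr(λ^{2p−1}) = 0` and the form `cs_p(∇, ∇^h)` itself vanishes. -/

open Module

/-- The trace over `C` of an `ℝ`-linear endomorphism of `E` whose underlying
function happens to be `C`-linear (and `0` otherwise). -/
noncomputable def trR (C : Type*) {E : Type*} [CommRing C] [AddCommGroup E]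
    [Module ℝ E] [Module C E] (e : E →ₗ[ℝ] E) : C :=
  letI := Classical.propDecidable
  if h : ∃ g : E →ₗ[C] E, ⇑g = ⇑e then LinearMap.trace C E h.choose else 0

/-- An ℝ-linear connection of the Lie algebra `L` (with anchor `ρ`) on the `C`-module `E`. -/
def IsConn {L C E : Type*} [LieRing L] [LieAlgebra ℝ L] [CommRing C] [Algebra ℝ C]
    [AddCommGroup E] [Module ℝ E] [Module C E]
    (ρ : L →ₗ[ℝ] Derivation ℝ C C) (D : L →ₗ[ℝ] Module.End ℝ E) : Prop :=
  ∀ (a : L) (f : C) (e : E), D a (f • e) = f • D a e + ρ a f • e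

/-- The curvature of an ℝ-linear map `D : L →ₗ[ℝ] End ℝ E`. -/
def curv {L E : Type*} [LieRing L] [LieAlgebra ℝ L] [AddCommGroup E] [Module ℝ E]
    (D : L →ₗ[ℝ] Module.End ℝ E) (a b : L) : Module.End ℝ E :=
  D a * D b - D b * D a - D ⁅a, b⁆

/-- The curvature as an `End ℝ E`-valued 2-form. -/
def curv2 {L E : Type*} [LieRing L] [LieAlgebra ℝ L] [AddCommGroup E] [Module ℝ E]
    (D : L →ₗ[ℝ] Module.End ℝ E) : (Fin 2 → L) → Module.End ℝ E :=
  fun a => curv D (a 0) (a 1)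

/-- The Chevalley–Eilenberg style differential of a `V`-valued `n`-form on `L`,
with respect to an action `act` of `L` on `V`:
`(dω)(a₁,…,a_{n+1}) = Σᵢ (−1)^{i+1} act(aᵢ)(ω(a₁,…,âᵢ,…)) +
  Σ_{i<j} (−1)^{i+j} ω(⁅aᵢ,aⱼ⁆, a₁,…,âᵢ,…,âⱼ,…)`. -/
def dGen {L V : Type*} [LieRing L] [AddCommGroup V] (act : L → V → V) :
    {n : ℕ} → ((Fin n → L) → V) → ((Fin (n + 1) → L) → V)
  | 0, ω, a => act (a 0) (ω Fin.elim0)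
  | (m + 1), ω, a =>
      (∑ i : Fin (m + 2), (-1 : ℤ) ^ (i : ℕ) • act (a i) (ω (fun k => a (i.succAbove k)))) +
      ∑ i : Fin (m + 2), ∑ j : Fin (m + 2),
        if h : (i : ℕ) < (j : ℕ) then
          (-1 : ℤ) ^ ((i : ℕ) + (j : ℕ)) • ω (Fin.cons ⁅a i, a j⁆
            (fun k : Fin m => a (j.succAbove
              ((⟨(i : ℕ), by have := j.isLt; omega⟩ : Fin (m + 1)).succAbove k))))
        else 0

/-- The differential `d_ρ` on `C`-valued ℝ-linear forms on `L`. -/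
def dRho {L C : Type*} [LieRing L] [LieAlgebra ℝ L] [CommRing C] [Algebra ℝ C]
    (ρ : L →ₗ[ℝ] Derivation ℝ C C) {n : ℕ} (ω : (Fin n → L) → C) :
    (Fin (n + 1) → L) → C :=
  dGen (fun a c => ρ a c) ω

/-- The differential `d^{∇̄}` on `End ℝ E`-valued ℝ-linear forms on `L`,
where `∇̄_a = [∇_a, ·]`. -/
def dEnd {L E : Type*} [LieRing L] [LieAlgebra ℝ L] [AddCommGroup E] [Module ℝ E]
    (D : L →ₗ[ℝ] Module.End ℝ E) {n : ℕ} (ω : (Fin n → L) → Module.End ℝ E) :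
    (Fin (n + 1) → L) → Module.End ℝ E :=
  dGen (fun a φ => D a * φ - φ * D a) ω

/-- The wedge product (with composition as multiplication of values) of
`End ℝ E`-valued forms:
`(ω∧η)(a₁,…,a_{m+n}) = (1/(m!·n!)) Σ_{τ} sgn τ · ω(a_{τ(1)},…) ∘ η(a_{τ(m+1)},…)`. -/
noncomputable def wedge {L E : Type*} [AddCommGroup E] [Module ℝ E] {m n : ℕ}
    (ω : (Fin m → L) → Module.End ℝ E) (η : (Fin n → L) → Module.End ℝ E) :
    (Fin (m + n) → L) → Module.End ℝ E :=
  fun a => ((m.factorial * n.factorial : ℝ))⁻¹ •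
    ∑ τ : Equiv.Perm (Fin (m + n)), ((Equiv.Perm.sign τ : ℤ) •
      (ω (fun i => a (τ (Fin.castAdd n i))) * η (fun j => a (τ (Fin.natAdd m j)))))

/-- The `p`-th wedge power of an `End ℝ E`-valued 2-form. -/
noncomputable def wpow {L E : Type*} [AddCommGroup E] [Module ℝ E]
    (R : (Fin 2 → L) → Module.End ℝ E) :
    (p : ℕ) → (Fin (2 * p) → L) → Module.End ℝ E
  | 0 => fun _ => 1
  | (p + 1) => fun a => wedge R (wpow R p) (fun i => a (Fin.cast (by omega) i))

/-- The `k`-th wedge power of an `End ℝ E`-valued 1-form. -/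
noncomputable def wpow1 {L E : Type*} [AddCommGroup E] [Module ℝ E]
    (θ : (Fin 1 → L) → Module.End ℝ E) :
    (k : ℕ) → (Fin k → L) → Module.End ℝ E
  | 0 => fun _ => 1
  | (k + 1) => fun a => wedge θ (wpow1 θ k) (fun i => a (Fin.cast (by omega) i))

/-- The Chern character form `ch_p(∇) = Tr_*((R^∇)^{∧p})`. -/
noncomputable def chp {L E : Type*} (C : Type*) [LieRing L] [LieAlgebra ℝ L]
    [CommRing C] [AddCommGroup E] [Module ℝ E] [Module C E]
    (D : L →ₗ[ℝ] Module.End ℝ E) (p : ℕ) : (Fin (2 * p) → L) → C :=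
  fun a => trR C (wpow (curv2 D) p a)

/-- `∫₀ˢ f(t) dt` for a function `f : ℝ → C` given by a polynomial with
coefficients in the ℝ-algebra `C` (and `0` if `f` is not polynomial). -/
noncomputable def intPolyTo {C : Type*} [CommRing C] [Algebra ℝ C] (s : ℝ) (f : ℝ → C) : C :=
  letI := Classical.propDecidable
  if h : ∃ P : Polynomial C, ∀ t : ℝ, f t = Polynomial.eval (algebraMap ℝ C t) P then
    ∑ k ∈ Finset.range (h.choose.natDegree + 1),
      (s ^ (k + 1) / ((k : ℝ) + 1)) • h.choose.coeff k
  else 0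

/-- The valuewise integral over the standard 2-simplex
`Δ² = {(t₁,t₂) : t₁ ≥ 0, t₂ ≥ 0, t₁ + t₂ ≤ 1}` of a `C`-valued polynomial function. -/
noncomputable def intSimplex2 {C : Type*} [CommRing C] [Algebra ℝ C] (f : ℝ → ℝ → C) : C :=
  intPolyTo 1 (fun t1 => intPolyTo (1 - t1) (fun t2 => f t1 t2))

/-- The Chern–Simons transgression form for a pair of ℝ-linear connections:
`cs_p(∇⁰,∇¹) = p·∫₀¹ Tr_*(λ ∧ (R_t)^{∧(p−1)}) dt` where `λ = ∇¹ − ∇⁰` and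
`R_t` is the curvature of `∇⁰ + t•λ`. -/
noncomputable def csPair {L E : Type*} (C : Type*) [LieRing L] [LieAlgebra ℝ L]
    [CommRing C] [Algebra ℝ C] [AddCommGroup E] [Module ℝ E] [Module C E]
    (D0 D1 : L →ₗ[ℝ] Module.End ℝ E) (p : ℕ) : (Fin (2 * (p - 1) + 1) → L) → C :=
  fun a => (p : ℝ) • intPolyTo 1 (fun t =>
    trR C (wedge (fun v : Fin 1 → L => (D1 - D0) (v 0))
      (wpow (curv2 (D0 + t • (D1 - D0))) (p - 1))
      (fun i => a (Fin.cast (by omega) i))))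

/-- The Chern–Simons transgression form for a triple of ℝ-linear connections:
`cs_p(∇⁰,∇¹,∇²) = −p(p−1)·∫_{Δ²} Tr_*(λ₁ ∧ λ₂ ∧ (R_{(t₁,t₂)})^{∧(p−2)}) dt₁dt₂`
where `λᵢ = ∇ⁱ − ∇⁰` and `R_{(t₁,t₂)}` is the curvature of `∇⁰ + t₁•λ₁ + t₂•λ₂`. -/
noncomputable def csTriple {L E : Type*} (C : Type*) [LieRing L] [LieAlgebra ℝ L]
    [CommRing C] [Algebra ℝ C] [AddCommGroup E] [Module ℝ E] [Module C E]
    (D0 D1 D2 : L →ₗ[ℝ] Module.End ℝ E) (p : ℕ) : (Fin (2 * (p - 2) + 2) → L) → C :=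
  fun a => (-((p : ℝ) * ((p : ℝ) - 1))) • intSimplex2 (fun t1 t2 =>
    trR C (wedge (fun v : Fin 1 → L => (D1 - D0) (v 0))
      (wedge (fun v : Fin 1 → L => (D2 - D0) (v 0))
        (wpow (curv2 (D0 + t1 • (D1 - D0) + t2 • (D2 - D0))) (p - 2)))
      (fun i => a (Fin.cast (by omega) i))))

open Polynomial LinearMap Equiv.Perm

/-! ### Antisymmetrized products -/

section AntisymmProd

variable {L A : Type*} [Ring A]

/-- The `n`-fold wedge power `u ∧ ⋯ ∧ u` of a ring-valued `1`-form `u`, as the sum over all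
permutations `τ` of `sgn τ · u(a_{τ(1)}) ⋯ u(a_{τ(n)})`; with the normalization of `wedge` there is
no factor `1 / n!`. -/
def antisymmProd (u : L → A) {n : ℕ} (a : Fin n → L) : A :=
  ∑ τ : Equiv.Perm (Fin n), (sign τ : ℤ) • (List.ofFn fun i => u (a (τ i))).prod

theorem antisymmProd_one (u : L → A) (a : Fin 1 → L) : antisymmProd u a = u (a 0) := by
  simp [antisymmProd]

theorem antisymmProd_two (u : L → A) (a : Fin 2 → L) :
    antisymmProd u a = u (a 0) * u (a 1) - u (a 1) * u (a 0) := by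
  have huniv : (Finset.univ : Finset (Equiv.Perm (Fin 2))) = {1, Equiv.swap 0 1} := by decide
  rw [antisymmProd, huniv, Finset.sum_pair (by decide)]
  simp [List.ofFn_succ, sub_eq_add_neg]

theorem antisymmProd_cast (u : L → A) {m n : ℕ} (h : m = n) (a : Fin n → L) :
    antisymmProd u (fun i => a (Fin.cast h i)) = antisymmProd u a := by
  subst h
  rfl

theorem sum_sign_smul_prod_comp_perm (u : L → A) {n : ℕ} (a : Fin n → L)
    (κ : Equiv.Perm (Fin n)) :
    ∑ τ : Equiv.Perm (Fin n), (sign τ : ℤ) • (List.ofFn fun i => u (a (τ (κ i)))).prod =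
      (sign κ : ℤ) • antisymmProd u a := by
  rw [antisymmProd, Finset.smul_sum]
  refine Fintype.sum_equiv (Equiv.mulRight κ) _ _ fun τ => ?_
  have hsign : (sign κ : ℤ) * sign (τ * κ) = sign τ := by
    rw [← Units.val_mul, Equiv.Perm.sign_mul, mul_left_comm, Int.units_mul_self, mul_one]
  simp only [smul_smul, Equiv.coe_mulRight, hsign, Equiv.Perm.mul_apply]

/-- The permutation of `{1, …, m + n}` acting by `σ₁` on the first `m` and by `σ₂` on the last `n`
elements. -/
def blockPerm {m n : ℕ} (σ₁ : Equiv.Perm (Fin m)) (σ₂ : Equiv.Perm (Fin n)) :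
    Equiv.Perm (Fin (m + n)) :=
  finSumFinEquiv.permCongr (Equiv.Perm.sumCongr σ₁ σ₂)

theorem sign_blockPerm {m n : ℕ} (σ₁ : Equiv.Perm (Fin m)) (σ₂ : Equiv.Perm (Fin n)) :
    sign (blockPerm σ₁ σ₂) = sign σ₁ * sign σ₂ := by
  rw [blockPerm, sign_permCongr, sign_sumCongr]

theorem blockPerm_castAdd {m n : ℕ} (σ₁ : Equiv.Perm (Fin m)) (σ₂ : Equiv.Perm (Fin n))
    (i : Fin m) : blockPerm σ₁ σ₂ (Fin.castAdd n i) = Fin.castAdd n (σ₁ i) := by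
  simp [blockPerm, Equiv.permCongr_apply]

theorem blockPerm_natAdd {m n : ℕ} (σ₁ : Equiv.Perm (Fin m)) (σ₂ : Equiv.Perm (Fin n))
    (j : Fin n) : blockPerm σ₁ σ₂ (Fin.natAdd m j) = Fin.natAdd m (σ₂ j) := by
  simp [blockPerm, Equiv.permCongr_apply]

theorem antisymmProd_mul_antisymmProd (u : L → A) {m n : ℕ} (a : Fin (m + n) → L) :
    antisymmProd u (fun i => a (Fin.castAdd n i)) * antisymmProd u (fun j => a (Fin.natAdd m j)) =
      ∑ σ₁ : Equiv.Perm (Fin m), ∑ σ₂ : Equiv.Perm (Fin n),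
        (sign (blockPerm σ₁ σ₂) : ℤ) •
          (List.ofFn fun i => u (a (blockPerm σ₁ σ₂ i))).prod := by
  simp only [antisymmProd, Finset.sum_mul_sum]
  refine Finset.sum_congr rfl fun σ₁ _ => Finset.sum_congr rfl fun σ₂ _ => ?_
  rw [smul_mul_smul_comm, ← List.prod_append, ← List.ofFn_fin_append, sign_blockPerm, Units.val_mul]
  congr 3
  funext i
  induction i using Fin.addCases with
  | left i => rw [Fin.append_left, blockPerm_castAdd]
  | right j => rw [Fin.append_right, blockPerm_natAdd]

theorem sum_sign_smul_antisymmProd_mul_antisymmProd (u : L → A) {m n : ℕ} (a : Fin (m + n) → L) :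
    ∑ τ : Equiv.Perm (Fin (m + n)), (sign τ : ℤ) •
        (antisymmProd u (fun i => a (τ (Fin.castAdd n i))) *
          antisymmProd u (fun j => a (τ (Fin.natAdd m j)))) =
      (m.factorial * n.factorial) • antisymmProd u a := by
  calc
    _ = ∑ τ : Equiv.Perm (Fin (m + n)), ∑ σ₁ : Equiv.Perm (Fin m), ∑ σ₂ : Equiv.Perm (Fin n),
          (sign (blockPerm σ₁ σ₂) : ℤ) •
            (sign τ : ℤ) • (List.ofFn fun i => u (a (τ (blockPerm σ₁ σ₂ i)))).prod := by
      refine Finset.sum_congr rfl fun τ _ => ?_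
      rw [antisymmProd_mul_antisymmProd u (fun i => a (τ i))]
      simp only [Finset.smul_sum]
      exact Finset.sum_congr rfl fun σ₁ _ => Finset.sum_congr rfl fun σ₂ _ => smul_comm _ _ _
    _ = ∑ _σ₁ : Equiv.Perm (Fin m), ∑ _σ₂ : Equiv.Perm (Fin n), antisymmProd u a := by
      rw [Finset.sum_comm]
      refine Finset.sum_congr rfl fun σ₁ _ => ?_
      rw [Finset.sum_comm]
      refine Finset.sum_congr rfl fun σ₂ _ => ?_
      rw [← Finset.smul_sum, sum_sign_smul_prod_comp_perm, smul_smul, ← Units.val_mul,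
        Int.units_mul_self, Units.val_one, one_smul]
    _ = (m.factorial * n.factorial) • antisymmProd u a := by
      simp only [Finset.sum_const, Finset.card_univ, Fintype.card_perm, Fintype.card_fin, mul_smul]

end AntisymmProd

section Wedge

variable {L E : Type*} [AddCommGroup E] [Module ℝ E]

theorem wedge_smul_smul {m n : ℕ} (c d : ℝ) (ω : (Fin m → L) → Module.End ℝ E)
    (η : (Fin n → L) → Module.End ℝ E) : wedge (c • ω) (d • η) = (c * d) • wedge ω η := by
  funext a
  simp only [wedge, Pi.smul_apply]
  rw [smul_comm, Finset.smul_sum (r := c * d)]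
  congr 1
  refine Finset.sum_congr rfl fun τ _ => ?_
  rw [smul_mul_smul_comm, smul_comm]

theorem wedge_antisymmProd (u : L → Module.End ℝ E) (m n : ℕ) :
    wedge (antisymmProd u (n := m)) (antisymmProd u (n := n)) = antisymmProd u := by
  funext a
  rw [wedge, sum_sign_smul_antisymmProd_mul_antisymmProd, ← Nat.cast_smul_eq_nsmul ℝ, Nat.cast_mul,
    inv_smul_smul₀ (by positivity)]

theorem wpow_smul_antisymmProd (u : L → Module.End ℝ E) (c : ℝ) (k : ℕ) :
    wpow (c • antisymmProd u) k = c ^ k • antisymmProd u := by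
  induction k with
  | zero =>
    funext a
    simp [wpow, antisymmProd]
  | succ k ih =>
    funext a
    rw [wpow, ih, wedge_smul_smul, wedge_antisymmProd, pow_succ']
    exact congrArg ((c * c ^ k) • ·) (antisymmProd_cast u _ a)

end Wedge

/-! ### Curvature along a segment of connections -/

section Curvature

variable {L E : Type*} [LieRing L] [LieAlgebra ℝ L] [AddCommGroup E] [Module ℝ E]

theorem curv2_add_smul_sub (D₀ D₁ : L →ₗ[ℝ] Module.End ℝ E) (t : ℝ) :
    curv2 (D₀ + t • (D₁ - D₀)) =
      (1 - t) • curv2 D₀ + t • curv2 D₁ + (t ^ 2 - t) • antisymmProd (D₁ - D₀) := by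
  funext a
  simp only [curv2, curv, antisymmProd_two, Pi.add_apply, Pi.smul_apply, LinearMap.add_apply,
    LinearMap.smul_apply, LinearMap.sub_apply, mul_add, add_mul, mul_sub, sub_mul, smul_mul_assoc,
    mul_smul_comm]
  module

theorem wedge_wpow_curv2_of_flat {D₀ D₁ : L →ₗ[ℝ] Module.End ℝ E}
    (h₀ : ∀ a b, curv D₀ a b = 0) (h₁ : ∀ a b, curv D₁ a b = 0) (t : ℝ) (k : ℕ) :
    wedge (fun v : Fin 1 → L => (D₁ - D₀) (v 0)) (wpow (curv2 (D₀ + t • (D₁ - D₀))) k) =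
      (t ^ 2 - t) ^ k • antisymmProd (D₁ - D₀) := by
  have hcurv : curv2 (D₀ + t • (D₁ - D₀)) = (t ^ 2 - t) • antisymmProd (D₁ - D₀) := by
    have hzero₀ : curv2 D₀ = 0 := funext fun a => h₀ (a 0) (a 1)
    have hzero₁ : curv2 D₁ = 0 := funext fun a => h₁ (a 0) (a 1)
    rw [curv2_add_smul_sub, hzero₀, hzero₁, smul_zero, smul_zero, zero_add, zero_add]
  have hone : (fun v : Fin 1 → L => (D₁ - D₀) (v 0)) = (1 : ℝ) • antisymmProd (D₁ - D₀) := by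
    funext v
    rw [one_smul, antisymmProd_one]
  rw [hcurv, hone, wpow_smul_antisymmProd, wedge_smul_smul, wedge_antisymmProd, one_mul]

end Curvature

/-! ### Adjoint operators and traces -/

theorem sign_revPerm (n : ℕ) :
    sign (Fin.revPerm : Equiv.Perm (Fin n)) = (-1) ^ n.choose 2 := by
  rw [sign_eq_prod_prod_Iio, Nat.choose_two_right, ← Finset.sum_range_id,
    ← Fin.sum_univ_eq_sum_range, ← Finset.prod_pow_eq_pow_sum]
  refine Finset.prod_congr rfl fun j _ => ?_
  calc
    _ = ∏ _i ∈ Finset.Iio j, (-1 : ℤˣ) :=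
      Finset.prod_congr rfl fun i hi => by simp [(Finset.mem_Iio.mp hi).le]
    _ = (-1) ^ (j : ℕ) := by simp

theorem odd_choose_two_of_odd {m : ℕ} (hm : Odd m) : Odd ((1 + 2 * m).choose 2) := by
  have hchoose : (1 + 2 * m).choose 2 = (1 + 2 * m) * m := by
    rw [Nat.choose_two_right, Nat.add_sub_cancel_left, mul_left_comm,
      Nat.mul_div_cancel_left _ two_pos]
  rw [hchoose]
  exact (odd_one.add_even (even_two_mul m)).mul hm

theorem reverse_ofFn {α : Type*} {n : ℕ} (f : Fin n → α) :
    (List.ofFn f).reverse = List.ofFn fun i => f i.rev := by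
  refine List.ext_getElem (by simp) fun i _ _ => ?_
  simp only [List.getElem_reverse, List.getElem_ofFn, List.length_ofFn]
  congr 1
  ext
  simp only [Fin.val_rev]
  omega

section Adjoint

variable {C E : Type*} [CommRing C] [AddCommGroup E] [Module C E] {h : E →ₗ[C] E →ₗ[C] C}

theorem isAdjointPair_list_prod {R : Type*} [Semiring R] [Module R E] (l : List (Module.End R E))
    (hl : ∀ T ∈ l, IsAdjointPair h h T T) : IsAdjointPair h h l.prod l.reverse.prod := by
  induction l with
  | nil => exact fun _ _ => rfl
  | cons T l ih =>
    rw [List.forall_mem_cons] at hl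
    rw [List.prod_cons, List.reverse_cons, List.prod_append, List.prod_singleton]
    exact (ih hl.2).comp hl.1

theorem isAdjointPair_antisymmProd {L R : Type*} [Ring R] [Module R E] {u : L → Module.End R E}
    (hu : ∀ a, IsAdjointPair h h (u a) (u a)) {n : ℕ} (a : Fin n → L) :
    IsAdjointPair h h ⇑(antisymmProd u a)
      ⇑((sign (Fin.revPerm : Equiv.Perm (Fin n)) : ℤ) • antisymmProd u a) := by
  intro s t
  rw [← sum_sign_smul_prod_comp_perm, antisymmProd]
  simp only [LinearMap.sum_apply, LinearMap.smul_apply, map_sum, map_zsmul, Fin.revPerm_apply]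
  refine Finset.sum_congr rfl fun τ _ => ?_
  rw [isAdjointPair_list_prod _ (List.forall_mem_ofFn_iff.mpr fun i => hu (a (τ i))), reverse_ofFn]

theorem isAdjointPair_smul_of_tower {R : Type*} [CommSemiring R] [Algebra R C] [Module R E]
    [IsScalarTower R C E] {T T' : Module.End R E} (c : R) (hT : IsAdjointPair h h T T') :
    IsAdjointPair h h ⇑(c • T) ⇑(c • T') := by
  intro s t
  simp only [LinearMap.smul_apply, map_smul_of_tower, hT s t]

theorem exists_linearMap_coe_eq_of_isAdjointPair (hinj : Function.Injective h) {f g : E → E}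
    (hfg : IsAdjointPair h h f g) : ∃ T : E →ₗ[C] E, ⇑T = f := by
  refine ⟨{ toFun := f, map_add' := fun s s' => hinj ?_, map_smul' := fun c s => hinj ?_ }, rfl⟩ <;>
  · ext t
    simp [hfg _ t]

theorem trace_eq_of_isAdjointPair [Module.Finite C E] [Module.Free C E]
    (hnd : Function.Bijective h) {T T' : E →ₗ[C] E} (hT : IsAdjointPair h h T T') :
    LinearMap.trace C E T = LinearMap.trace C E T' := by
  let e : E ≃ₗ[C] Module.Dual C E := LinearEquiv.ofBijective h hnd
  have hconj : e.conj T = Module.Dual.transpose (R := C) T' := by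
    ext φ t
    obtain ⟨s, rfl⟩ := e.surjective φ
    simpa [LinearEquiv.conj_apply, e, Module.Dual.transpose_apply] using hT s t
  rw [← trace_conj' T e, hconj, trace_transpose']

theorem trR_coe [Module ℝ E] {e : E →ₗ[ℝ] E} {T : E →ₗ[C] E}
    (hT : ⇑T = ⇑e) : trR C e = LinearMap.trace C E T := by
  have hex : ∃ g : E →ₗ[C] E, ⇑g = ⇑e := ⟨T, hT⟩
  rw [trR, dif_pos hex, DFunLike.coe_injective (hex.choose_spec.trans hT.symm)]

theorem trR_eq_zero_of_isAdjointPair_neg [Algebra ℝ C] [Module ℝ E] [Module.Finite C E]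
    [Module.Free C E] (hnd : Function.Bijective h) {e : Module.End ℝ E}
    (he : IsAdjointPair h h ⇑e ⇑(-e)) : trR C e = 0 := by
  obtain ⟨T, hT⟩ := exists_linearMap_coe_eq_of_isAdjointPair hnd.1 he
  have hskew : LinearMap.trace C E T = -LinearMap.trace C E T := by
    rw [← map_neg]
    refine trace_eq_of_isAdjointPair hnd fun s t => ?_
    simpa [hT] using he s t
  have htwo : (2 : ℝ) • LinearMap.trace C E T = 0 := by
    rw [two_smul, ← eq_neg_iff_add_eq_zero, ← hskew]
  rw [trR_coe hT, (smul_eq_zero_iff_right two_ne_zero).mp htwo]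

theorem trR_smul_antisymmProd_eq_zero {L : Type*} [Algebra ℝ C] [Module ℝ E] [IsScalarTower ℝ C E]
    [Module.Finite C E] [Module.Free C E] (hnd : Function.Bijective h) {u : L → Module.End ℝ E}
    (hu : ∀ a, IsAdjointPair h h (u a) (u a)) {n : ℕ} (hn : Odd (n.choose 2)) (c : ℝ)
    (a : Fin n → L) : trR C (c • antisymmProd u a) = 0 := by
  have hadj := isAdjointPair_smul_of_tower c (isAdjointPair_antisymmProd hu a)
  rw [sign_revPerm, hn.neg_one_pow, Units.val_neg, Units.val_one, neg_one_smul, smul_neg] at hadj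
  exact trR_eq_zero_of_isAdjointPair_neg hnd hadj

end Adjoint

section AdjointConnections

variable {L C E : Type*} [LieRing L] [LieAlgebra ℝ L] [CommRing C] [Algebra ℝ C] [AddCommGroup E]
  [Module ℝ E] [Module C E] {ρ : L →ₗ[ℝ] Derivation ℝ C C} {h : E →ₗ[C] E →ₗ[C] C}
  {D D' : L →ₗ[ℝ] Module.End ℝ E}

/-- `D'` is the connection adjoint to `D` with respect to `h`, written `∇^h` when `D` is `∇`. Only
the duality identity is recorded, not the Leibniz rules for `D` and `D'`. -/
def IsAdjointConn (ρ : L →ₗ[ℝ] Derivation ℝ C C) (h : E →ₗ[C] E →ₗ[C] C)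
    (D D' : L →ₗ[ℝ] Module.End ℝ E) : Prop :=
  ∀ (a : L) (s t : E), ρ a (h s t) = h (D a s) t + h s (D' a t)

namespace IsAdjointConn

theorem isAdjointPair_sub (hadj : IsAdjointConn ρ h D D') (hsymm : ∀ s t, h s t = h t s) (a : L) :
    IsAdjointPair h h ((D' - D) a) ((D' - D) a) := by
  intro s t
  have hst := hadj a s t
  have hts := hadj a t s
  rw [hsymm t s, hsymm (D a t) s, hsymm t (D' a s)] at hts
  simp only [LinearMap.sub_apply, map_sub]
  linear_combination hst - hts

theorem isAdjointPair_curv (hadj : IsAdjointConn ρ h D D')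
    (hρ : ∀ (a b : L) (f : C), ρ ⁅a, b⁆ f = ρ a (ρ b f) - ρ b (ρ a f)) (a b : L) :
    IsAdjointPair h h ⇑(curv D a b) ⇑(-curv D' a b) := by
  intro s t
  have hρst := hρ a b (h s t)
  simp only [hadj _ _ _, map_add] at hρst
  simp only [curv, LinearMap.neg_apply, LinearMap.sub_apply, Module.End.mul_apply, map_neg, map_sub]
  linear_combination -hρst

theorem curv_eq_zero (hadj : IsAdjointConn ρ h D D')
    (hρ : ∀ (a b : L) (f : C), ρ ⁅a, b⁆ f = ρ a (ρ b f) - ρ b (ρ a f)) (hsep : h.SeparatingRight)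
    (hflat : ∀ a b, curv D a b = 0) (a b : L) : curv D' a b = 0 := by
  ext t
  refine hsep _ fun s => ?_
  have hst := hadj.isAdjointPair_curv hρ a b s t
  rw [hflat, LinearMap.zero_apply, map_zero, LinearMap.zero_apply, LinearMap.neg_apply,
    map_neg] at hst
  exact neg_eq_zero.mp hst.symm

end IsAdjointConn

end AdjointConnections

/-! ### Vanishing of the Chern–Simons form -/

theorem eq_zero_of_forall_eval_algebraMap_eq_zero {K A : Type*} [Field K] [Infinite K] [Ring A]
    [Algebra K A] {P : A[X]} (hP : ∀ t : K, P.eval (algebraMap K A t) = 0) : P = 0 := by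
  ext k
  rw [coeff_zero, ← Module.forall_dual_apply_eq_zero_iff K]
  intro φ
  let Q : K[X] := P.sum fun i c => monomial i (φ c)
  have hQ_coeff : Q.coeff k = φ (P.coeff k) := by
    simp +contextual [Q, sum_def, coeff_monomial]
  have hQ : Q = 0 := Polynomial.funext fun t => by
    calc
      Q.eval t = φ (P.eval (algebraMap K A t)) := by
        rw [eval_eq_sum (p := P), sum_def, map_sum]
        simp only [Q, sum_def, eval_finsetSum, eval_monomial]
        refine Finset.sum_congr rfl fun i _ => ?_
        rw [← map_pow, ← Algebra.commutes, ← Algebra.smul_def, map_smul, smul_eq_mul, mul_comm]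
      _ = (0 : K[X]).eval t := by rw [hP, map_zero, eval_zero]
  rw [← hQ_coeff, hQ, coeff_zero]

theorem intPolyTo_zero {C : Type*} [CommRing C] [Algebra ℝ C] (s : ℝ) :
    intPolyTo s (fun _ => (0 : C)) = 0 := by
  have hex : ∃ P : C[X], ∀ t : ℝ, 0 = P.eval (algebraMap ℝ C t) := ⟨0, fun _ => eval_zero.symm⟩
  have hchoose : hex.choose = 0 :=
    eq_zero_of_forall_eval_algebraMap_eq_zero fun t => (hex.choose_spec t).symm
  rw [intPolyTo, dif_pos hex]
  simp [hchoose]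

theorem dGen_zero {L V : Type*} [LieRing L] [AddCommGroup V] {act : L → V → V}
    (hact : ∀ a, act a 0 = 0) (n : ℕ) : dGen act (0 : (Fin n → L) → V) = 0 := by
  funext a
  cases n <;> simp [dGen, hact]

theorem stmt15_general {L C E : Type*} [LieRing L] [LieAlgebra ℝ L] [CommRing C] [Algebra ℝ C]
    [AddCommGroup E] [Module ℝ E] [Module C E] [IsScalarTower ℝ C E] [Module.Finite C E]
    [Module.Free C E] (ρ : L →ₗ[ℝ] Derivation ℝ C C)
    (hρ : ∀ (a b : L) (f : C), ρ ⁅a, b⁆ f = ρ a (ρ b f) - ρ b (ρ a f))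
    (h : E →ₗ[C] E →ₗ[C] C) (hsymm : ∀ s t : E, h s t = h t s) (hnd : Function.Bijective h)
    (D Dh : L →ₗ[ℝ] Module.End ℝ E) (hadj : IsAdjointConn ρ h D Dh)
    (hflat : ∀ a b : L, curv D a b = 0) (p : ℕ) (hp : 2 ≤ p) (hpeven : Even p) :
    csPair C D Dh p = 0 := by
  have hsep : h.SeparatingRight := fun t ht =>
    (map_eq_zero_iff h hnd.1).mp (LinearMap.ext fun s => (hsymm t s).trans (ht s))
  have hflat' : ∀ a b, curv Dh a b = 0 := hadj.curv_eq_zero hρ hsep hflat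
  have hodd : Odd ((1 + 2 * (p - 1)).choose 2) :=
    odd_choose_two_of_odd (Nat.Even.sub_odd (one_le_two.trans hp) hpeven odd_one)
  funext a
  simp only [csPair, wedge_wpow_curv2_of_flat hflat hflat', Pi.smul_apply,
    trR_smul_antisymmProd_eq_zero hnd (hadj.isAdjointPair_sub hsymm) hodd, intPolyTo_zero,
    smul_zero, Pi.zero_apply]

/-- for flat `∇`, even `p ≥ 2`, and assuming a metric ℝ-linear
connection exists, the secondary characteristic class `u_{2p−1} = [cs_p(∇,∇^h)]`
vanishes: `cs_p(∇,∇^h)` is `d_ρ`-exact. -/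
theorem stmt15 {L : Type*} {C : Type*} {E : Type*}
    [LieRing L] [LieAlgebra ℝ L] [CommRing C] [Algebra ℝ C] [Module C L]
    [AddCommGroup E] [Module ℝ E] [Module C E] [IsScalarTower ℝ C E]
    [Module.Finite C E] [Module.Free C E]
    (ρ : L →ₗ[ℝ] Derivation ℝ C C)
    (hρ : ∀ (a b : L) (f : C), ρ ⁅a, b⁆ f = ρ a (ρ b f) - ρ b (ρ a f))
    (hLeib : ∀ (a b : L) (f : C), ⁅a, f • b⁆ = f • ⁅a, b⁆ + ρ a f • b)
    (h : E →ₗ[C] E →ₗ[C] C) (hsymm : ∀ s t : E, h s t = h t s)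
    (hnd : Function.Bijective (⇑h))
    (D Dh : L →ₗ[ℝ] Module.End ℝ E) (hD : IsConn ρ D) (hDh : IsConn ρ Dh)
    (hadj : ∀ (a : L) (s t : E), ρ a (h s t) = h (D a s) t + h s (Dh a t))
    (hflat : ∀ a b : L, curv D a b = 0)
    (hm : ∃ Dm : L →ₗ[ℝ] Module.End ℝ E, IsConn ρ Dm ∧
      ∀ (a : L) (s t : E), ρ a (h s t) = h (Dm a s) t + h s (Dm a t))
    (p : ℕ) (hp : 2 ≤ p) (hpeven : Even p) :
    ∃ η : AlternatingMap ℝ L C (Fin (2 * p - 2)),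
      dRho ρ (⇑η) = fun v => csPair C D Dh p (fun i => v (Fin.cast (by omega) i)) := by
  rw [stmt15_general ρ hρ h hsymm hnd D Dh hadj hflat p hp hpeven]
  exact ⟨0, dGen_zero (fun a => map_zero (ρ a)) _⟩
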